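/- For d ≥ 3 and n ∈ ℕ, the dimension of the space H_n^d of spherical harmonics of degree n on S^{d-1} equals (2n+d−2)(n+d−3)! / ((d−2)! · n!). -/

import Mathlib

open MvPolynomial

/-- The space of spherical harmonics of degree `n` on the unit sphere `S^{d-1} ⊂ ℝ^d`:
restrictions to the sphere of harmonic homogeneous polynomials of degree `n`. -/
noncomputable def harmSpace (d n : ℕ) :
    Submodule ℝ ((Metric.sphere (0 : EuclideanSpace ℝ (Fin d)) 1) → ℝ) :=
  Submodule.span ℝ {f | ∃ P : MvPolynomial (Fin d) ℝ,
    P.IsHomogeneous n ∧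
    (∑ i : Fin d, MvPolynomial.pderiv i (MvPolynomial.pderiv i P)) = 0 ∧
    ∀ x : Metric.sphere (0 : EuclideanSpace ℝ (Fin d)) 1,
      f x = MvPolynomial.eval (fun i => (x : EuclideanSpace ℝ (Fin d)) i) P}

/-!
The Laplacian maps the homogeneous polynomials of degree `n + 2` onto those of degree `n`, so by
rank-nullity the harmonic ones have dimension `multichoose d (n + 2) - multichoose d n`. Two
applications of Pascal's rule turn this difference into
`multichoose (d - 1) (n + 2) + multichoose (d - 1) (n + 1)`. Restriction to the sphere loses
nothing: by homogeneity, a form that vanishes on the sphere vanishes on every ray.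
-/

open Module
open scoped Nat

section Laplacian

variable {σ R : Type*} [CommSemiring R]

theorem pderiv_pderiv_monomial_add_single (i : σ) (s : σ →₀ ℕ) (c : R) :
    pderiv i (pderiv i (monomial (s + Finsupp.single i 2) c)) =
      ((s i + 2) * (s i + 1) : R) • monomial s c := by
  have hs : s + Finsupp.single i 2 - Finsupp.single i 1 = s + Finsupp.single i 1 := by
    rw [← one_add_one_eq_two, Finsupp.single_add, ← add_assoc, add_tsub_cancel_right]
  rw [pderiv_monomial, hs, pderiv_monomial, add_tsub_cancel_right, smul_monomial]
  simp only [Finsupp.add_apply, Finsupp.single_eq_same, Nat.cast_add, Nat.cast_ofNat,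
    Nat.cast_one, smul_eq_mul]
  congr 1
  ring

theorem pderiv_pderiv_monomial_of_lt_two {i : σ} {s : σ →₀ ℕ} (hs : s i < 2) (c : R) :
    pderiv i (pderiv i (monomial s c)) = 0 := by
  rw [pderiv_monomial, pderiv_monomial, Finsupp.tsub_apply, Finsupp.single_eq_same]
  interval_cases s i <;> simp

variable [Fintype σ]

variable (σ R) in
/-- The Laplace operator `∑ i, ∂²/∂xᵢ²` on polynomials, as a formal linear operator over an
arbitrary commutative semiring. -/
noncomputable def mvLaplacian : MvPolynomial σ R →ₗ[R] MvPolynomial σ R :=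
  ∑ i, (pderiv i).toLinearMap ∘ₗ (pderiv i).toLinearMap

theorem mvLaplacian_apply (P : MvPolynomial σ R) :
    mvLaplacian σ R P = ∑ i, pderiv i (pderiv i P) := by
  simp [mvLaplacian]

theorem isHomogeneous_mvLaplacian {P : MvPolynomial σ R} {n : ℕ} (hP : P.IsHomogeneous n) :
    (mvLaplacian σ R P).IsHomogeneous (n - 2) := by
  rw [mvLaplacian_apply]
  exact IsHomogeneous.sum _ _ _ fun i _ => hP.pderiv.pderiv

theorem mvLaplacian_eq_zero_of_lt_two {P : MvPolynomial σ R} {n : ℕ} (hP : P.IsHomogeneous n)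
    (hn : n < 2) : mvLaplacian σ R P = 0 := by
  rw [mvLaplacian_apply]
  refine Finset.sum_eq_zero fun i _ => ?_
  have hdeg : (pderiv i P).totalDegree = 0 := by
    have := (hP.pderiv (i := i)).totalDegree_le
    omega
  rw [totalDegree_eq_zero_iff_eq_C.1 hdeg, pderiv_C]

variable (σ R) in
/-- The space of harmonic homogeneous polynomials of degree `n`, before restriction to a sphere. -/
noncomputable def harmonicSubmodule (n : ℕ) : Submodule R (MvPolynomial σ R) :=
  homogeneousSubmodule σ R n ⊓ LinearMap.ker (mvLaplacian σ R)

end Laplacian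

section Surjectivity

variable {σ K : Type*} [Fintype σ] [Field K] [CharZero K]

-- Up to a nonzero factor, `Δ (X^s * X i₀ ^ 2)` is `X^s` plus monomials that have lower degree than
-- `X^s` in the variables other than `i₀`; hence the induction on that degree.
theorem monomial_mem_map_mvLaplacian (i₀ : σ) (s : σ →₀ ℕ) :
    monomial s (1 : K) ∈ (homogeneousSubmodule σ K (s.degree + 2)).map (mvLaplacian σ K) := by
  classical
  induction hm : (s.erase i₀).degree using Nat.strong_induction_on generalizing s with
  | _ m ih =>
  set V := (homogeneousSubmodule σ K (s.degree + 2)).map (mvLaplacian σ K) with hV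
  set Q : MvPolynomial σ K := monomial (s + Finsupp.single i₀ 2) 1 with hQ
  have lap_mem : mvLaplacian σ K Q ∈ V :=
    Submodule.mem_map_of_mem (isHomogeneous_monomial _ (by simp))
  have rest_mem : ∑ i ∈ Finset.univ.erase i₀, pderiv i (pderiv i Q) ∈ V := by
    refine Submodule.sum_mem _ fun i hi => ?_
    have hne : i ≠ i₀ := Finset.ne_of_mem_erase hi
    rcases lt_or_ge (s i) 2 with hsi | hsi
    · rw [pderiv_pderiv_monomial_of_lt_two (by simpa [hne] using hsi)]
      exact zero_mem _
    · obtain ⟨t, rfl⟩ := exists_add_of_le (Finsupp.single_le_iff.2 hsi)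
      rw [hQ, add_assoc, add_comm (Finsupp.single i 2), pderiv_pderiv_monomial_add_single]
      refine Submodule.smul_mem _ _ ?_
      have hdeg : (Finsupp.single i 2 + t).degree = (t + Finsupp.single i₀ 2).degree := by
        simp [add_comm]
      rw [hV, hdeg]
      refine ih _ ?_ _ rfl
      simp [← hm, Finsupp.erase_add, Finsupp.erase_single_ne hne.symm]
  rw [mvLaplacian_apply, ← Finset.add_sum_erase _ _ (Finset.mem_univ i₀),
    Submodule.add_mem_iff_left _ rest_mem, hQ, pderiv_pderiv_monomial_add_single] at lap_mem
  refine (Submodule.smul_mem_iff _ ?_).1 lap_mem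
  norm_cast

theorem map_mvLaplacian_homogeneousSubmodule [Nonempty σ] (n : ℕ) :
    (homogeneousSubmodule σ K (n + 2)).map (mvLaplacian σ K) = homogeneousSubmodule σ K n := by
  refine le_antisymm (Submodule.map_le_iff_le_comap.2 fun _ => isHomogeneous_mvLaplacian) ?_
  rw [homogeneousSubmodule_eq_finsupp_supported σ K n,
    AddMonoidAlgebra.supported_eq_span_single, Submodule.span_le]
  rintro _ ⟨s, rfl, rfl⟩
  exact monomial_mem_map_mvLaplacian (Classical.arbitrary σ) s

end Surjectivity

section Dimension

theorem finrank_homogeneousSubmodule {σ R : Type*} [Fintype σ] [CommRing R] [Nontrivial R]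
    (n : ℕ) : finrank R (homogeneousSubmodule σ R n) = (Fintype.card σ).multichoose n := by
  classical
  have hset : {s : σ →₀ ℕ | s.degree = n} =
      ((Finset.univ : Finset σ).finsuppAntidiag n : Set (σ →₀ ℕ)) := by
    ext s
    simp [Finset.mem_finsuppAntidiag, Finsupp.degree_eq_sum]
  rw [homogeneousSubmodule_eq_finsupp_supported, hset,
    (AddMonoidAlgebra.supportedEquivFinsupp _).finrank_eq, finrank_finsupp_self]
  simp [Finset.card_finsuppAntidiag_nat_eq_multichoose]

theorem finrank_harmonicSubmodule_of_lt_two {σ R : Type*} [Fintype σ] [CommRing R] [Nontrivial R]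
    {n : ℕ} (hn : n < 2) :
    finrank R (harmonicSubmodule σ R n) = (Fintype.card σ).multichoose n := by
  rw [← finrank_homogeneousSubmodule (R := R), harmonicSubmodule, inf_eq_left.2]
  exact fun P hP => mvLaplacian_eq_zero_of_lt_two hP hn

theorem finrank_map_add_finrank_inf_ker {K V W : Type*} [DivisionRing K]
    [AddCommGroup V] [Module K V] [AddCommGroup W] [Module K W] (f : V →ₗ[K] W)
    (p : Submodule K V) [Module.Finite K p] :
    finrank K (p.map f) + finrank K (p ⊓ LinearMap.ker f : Submodule K V) = finrank K p := by
  rw [← (f.domRestrict p).finrank_range_add_finrank_ker, LinearMap.range_domRestrict,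
    LinearMap.ker_domRestrict, ← Submodule.map_comap_subtype, Submodule.finrank_map_subtype_eq]

variable {σ K : Type*} [Fintype σ] [Field K] [CharZero K]

theorem multichoose_add_finrank_harmonicSubmodule [Nonempty σ] (n : ℕ) :
    (Fintype.card σ).multichoose n + finrank K (harmonicSubmodule σ K (n + 2)) =
      (Fintype.card σ).multichoose (n + 2) := by
  have : Module.Finite K (homogeneousSubmodule σ K (n + 2)) :=
    Module.Finite.iff_fg.2 (homogeneousSubmodule_fg σ K (n + 2))
  rw [← finrank_homogeneousSubmodule (R := K), ← finrank_homogeneousSubmodule (R := K),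
    ← map_mvLaplacian_homogeneousSubmodule]
  exact finrank_map_add_finrank_inf_ker _ _

theorem finrank_harmonicSubmodule_succ {m : ℕ} (hσ : Fintype.card σ = m + 1) (n : ℕ) :
    finrank K (harmonicSubmodule σ K (n + 1)) = m.multichoose (n + 1) + m.multichoose n := by
  cases n with
  | zero => simp [finrank_harmonicSubmodule_of_lt_two, hσ]
  | succ n =>
    have : Nonempty σ := Fintype.card_pos_iff.1 (by omega)
    have h : (m + 1).multichoose n + finrank K (harmonicSubmodule σ K (n + 1 + 1)) =
        (m + 1).multichoose (n + 1 + 1) := hσ ▸ multichoose_add_finrank_harmonicSubmodule n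
    rw [Nat.multichoose_succ_succ, Nat.multichoose_succ_succ] at h
    omega

theorem multichoose_succ_mul_factorial_mul_factorial (m n : ℕ) :
    (m + 1).multichoose n * (m ! * n !) = (m + n)! := by
  rw [Nat.multichoose_eq, Nat.add_right_comm, Nat.add_sub_cancel, ← mul_assoc,
    Nat.add_choose_mul_factorial_mul_factorial]

theorem finrank_harmonicSubmodule_mul_factorial {m n : ℕ} (hσ : Fintype.card σ = m + 2)
    (hmn : 0 < m + n) :
    finrank K (harmonicSubmodule σ K n) * (m ! * n !) = (2 * n + m) * (m + n - 1)! := by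
  cases n with
  | zero =>
    rw [finrank_harmonicSubmodule_of_lt_two two_pos]
    simpa using (Nat.mul_factorial_pred hmn.ne').symm
  | succ n =>
    have h₁ := multichoose_succ_mul_factorial_mul_factorial m (n + 1)
    have h₂ := multichoose_succ_mul_factorial_mul_factorial m n
    calc finrank K (harmonicSubmodule σ K (n + 1)) * (m ! * (n + 1)!)
      _ = (m + 1).multichoose (n + 1) * (m ! * (n + 1)!) +
          (n + 1) * ((m + 1).multichoose n * (m ! * n !)) := by
        rw [finrank_harmonicSubmodule_succ hσ, Nat.factorial_succ n]
        ring
      _ = (m + n + 1)! + (n + 1) * (m + n)! := by rw [h₁, h₂, add_assoc]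
      _ = (2 * (n + 1) + m) * (m + n)! := by
        rw [Nat.factorial_succ]
        ring

end Dimension

section Sphere

theorem eval_smul_of_isHomogeneous {σ R : Type*} [CommSemiring R] {P : MvPolynomial σ R} {n : ℕ}
    (hP : P.IsHomogeneous n) (c : R) (x : σ → R) : eval (c • x) P = c ^ n * eval x P := by
  rw [eval_eq, eval_eq, Finset.mul_sum]
  refine Finset.sum_congr rfl fun s hs => ?_
  simp only [Pi.smul_apply, smul_eq_mul, mul_pow, Finset.prod_mul_distrib,
    Finset.prod_pow_eq_pow_sum, ← hP.degree_eq_sum_deg_support hs]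
  ring

theorem exists_norm_eq_one_and_smul_eq {E : Type*} [NormedAddCommGroup E] [NormedSpace ℝ E]
    [Nontrivial E] (x : E) : ∃ (c : ℝ) (y : E), ‖y‖ = 1 ∧ c • y = x := by
  rcases eq_or_ne x 0 with rfl | hx
  · obtain ⟨y, hy⟩ := exists_norm_eq E zero_le_one
    exact ⟨0, y, hy, zero_smul ℝ y⟩
  · exact ⟨‖x‖, NormedSpace.normalize x, NormedSpace.norm_normalize_eq_one_iff.2 hx,
      NormedSpace.norm_smul_normalize x⟩

variable {σ : Type*} [Fintype σ]

variable (σ) in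
/-- Restriction of real polynomials to the Euclidean unit sphere, as a linear map. -/
noncomputable def sphereRestrict :
    MvPolynomial σ ℝ →ₗ[ℝ] (Metric.sphere (0 : EuclideanSpace ℝ σ) 1 → ℝ) :=
  LinearMap.pi fun x => (aeval fun i => (x : EuclideanSpace ℝ σ) i).toLinearMap

theorem sphereRestrict_apply (P : MvPolynomial σ ℝ)
    (x : Metric.sphere (0 : EuclideanSpace ℝ σ) 1) :
    sphereRestrict σ P x = eval (fun i => (x : EuclideanSpace ℝ σ) i) P := by
  simp [sphereRestrict, aeval_eq_eval]

theorem disjoint_homogeneousSubmodule_ker_sphereRestrict [Nonempty σ] (n : ℕ) :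
    Disjoint (homogeneousSubmodule σ ℝ n) (LinearMap.ker (sphereRestrict σ)) := by
  rw [Submodule.disjoint_def]
  intro P hP hker
  refine MvPolynomial.funext fun x => ?_
  obtain ⟨c, y, hy, hx⟩ := exists_norm_eq_one_and_smul_eq (WithLp.toLp 2 x)
  have hPy : eval (fun i => y i) P = 0 := by
    rw [← sphereRestrict_apply P ⟨y, mem_sphere_zero_iff_norm.2 hy⟩, LinearMap.mem_ker.1 hker,
      Pi.zero_apply]
  calc eval x P = eval (c • fun i => y i) P := congrArg (eval · P) (congrArg WithLp.ofLp hx.symm)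
    _ = eval x 0 := by rw [eval_smul_of_isHomogeneous hP, hPy, mul_zero, map_zero]

theorem harmSpace_eq_map_sphereRestrict (d n : ℕ) :
    harmSpace d n = (harmonicSubmodule (Fin d) ℝ n).map (sphereRestrict (Fin d)) := by
  rw [harmSpace,
    ← Submodule.span_eq ((harmonicSubmodule (Fin d) ℝ n).map (sphereRestrict (Fin d)))]
  congr 1
  ext f
  constructor
  · rintro ⟨P, hP, hlap, hf⟩
    refine ⟨P, ⟨hP, (mvLaplacian_apply P).trans hlap⟩, ?_⟩
    ext x
    rw [hf, sphereRestrict_apply]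
  · rintro ⟨P, ⟨hP, hlap⟩, rfl⟩
    exact ⟨P, hP, (mvLaplacian_apply P).symm.trans hlap, sphereRestrict_apply P⟩

theorem finrank_harmSpace (d n : ℕ) [NeZero d] :
    finrank ℝ (harmSpace d n) = finrank ℝ (harmonicSubmodule (Fin d) ℝ n) := by
  have hinj : Function.Injective
      ((sphereRestrict (Fin d)).domRestrict (harmonicSubmodule (Fin d) ℝ n)) :=
    LinearMap.injective_domRestrict_iff.2
      ((disjoint_homogeneousSubmodule_ker_sphereRestrict n).mono_left inf_le_left)
  rw [harmSpace_eq_map_sphereRestrict, ← LinearMap.range_domRestrict,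
    LinearMap.finrank_range_of_inj hinj]

end Sphere

theorem stmt2_general (d n : ℕ) (hd : 2 ≤ d) (hdn : 3 ≤ n + d) :
    finrank ℝ (harmSpace d n) * ((d - 2)! * n !) = (2 * n + d - 2) * (n + d - 3)! := by
  obtain ⟨m, rfl⟩ := Nat.exists_eq_add_of_le' hd
  rw [finrank_harmSpace, Nat.add_sub_cancel,
    finrank_harmonicSubmodule_mul_factorial (Fintype.card_fin _) (by omega)]
  congr 2
  omega

/-- For d ≥ 3 and n ∈ ℕ, dim H_n^d = (2n+d−2)(n+d−3)! / ((d−2)!·n!)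
(stated in multiplied-out form, since the division is exact). -/
theorem stmt2 (d n : ℕ) (hd : 3 ≤ d) :
    Module.finrank ℝ (harmSpace d n) * ((d-2).factorial * n.factorial)
      = (2*n+d-2) * (n+d-3).factorial :=
  stmt2_general d n (by omega) (by omega)
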